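/- Let m and m' be models such that m' results from traversing a single minimal transition x ← P (for some pattern P) or x ← e (for some expression e) from m, i.e., m' = m[x ← m'] where m.x is an unknown, and let σ be an environment. Then for every description d' generated by m' in σ, the x-context d = d'.x̄ is a description generated by m in σ: d' ∈ m'[σ] implies d'.x̄ ∈ m[σ]. -/

import Mathlib

/-- A k-ary pattern: a relation between a whole value and a list of part values,
such that the whole is unique given the parts. -/
structure Pattern (V : Type) where
  rel : V → List V → Prop
  functional : ∀ (vs : List V) (v v' : V), rel v vs → rel v' vs → v = v'

/-- A model: a finite tree whose nodes carry variables (naturals) and are either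
unknowns, expressions, or pattern nodes with submodels. -/
inductive Model (V E : Type) : Type where
  | unknown : ℕ → Model V E
  | expr : ℕ → E → Model V E
  | pat : ℕ → Pattern V → List (Model V E) → Model V E

/-- A description: a finite tree assigning a value to each variable. -/
inductive Descr (V : Type) : Type where
  | atom : ℕ → V → Descr V
  | comp : ℕ → V → Pattern V → List (Descr V) → Descr V

def Descr.value {V : Type} : Descr V → V
  | .atom _ v => v
  | .comp _ v _ _ => v

def Descr.rootVar {V : Type} : Descr V → ℕ
  | .atom x _ => x
  | .comp x _ _ _ => x

def Model.rootVar {V E : Type} : Model V E → ℕ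
  | .unknown x => x
  | .expr x _ => x
  | .pat x _ _ => x

/-- Variables of a model. -/
def Model.vars {V E : Type} : Model V E → List ℕ
  | .unknown x => [x]
  | .expr x _ => [x]
  | .pat x _ ms => x :: (ms.attach.map (fun m => m.1.vars)).flatten
decreasing_by
  simp_wf
  have := List.sizeOf_lt_of_mem m.2
  omega

/-- Variables of a description. -/
def Descr.vars {V : Type} : Descr V → List ℕ
  | .atom x _ => [x]
  | .comp x _ _ ds => x :: (ds.attach.map (fun d => d.1.vars)).flatten
decreasing_by
  simp_wf
  have := List.sizeOf_lt_of_mem d.2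
  omega

/-- The generation relation `d ∈ m[σ]`, parameterized by a partial evaluation
function for expressions. -/
inductive Gen {V E : Type} (ev : E → (ℕ → Option V) → Option V) :
    Model V E → (ℕ → Option V) → Descr V → Prop where
  | unknown (x : ℕ) (σ : ℕ → Option V) (v : V) :
      Gen ev (.unknown x) σ (.atom x v)
  | expr (x : ℕ) (e : E) (σ : ℕ → Option V) (v : V) :
      ev e σ = some v → Gen ev (.expr x e) σ (.atom x v)
  | pat (x : ℕ) (P : Pattern V) (ms : List (Model V E)) (σ : ℕ → Option V)
      (v : V) (ds : List (Descr V)) :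
      ms.length = ds.length →
      P.rel v (ds.map Descr.value) →
      (∀ (i : ℕ) (h₁ : i < ms.length) (h₂ : i < ds.length),
        Gen ev (ms.get ⟨i, h₁⟩) σ (ds.get ⟨i, h₂⟩)) →
      Gen ev (.pat x P ms) σ (.comp x v P ds)

/-- `Model.Splits m x f c`: the variable `x` occurs in `m`, the `x`-factor (subtree
rooted at `x`) is `f`, and the `x`-context (with the subtree at `x` replaced by an
unknown) is `c`. -/
inductive Model.Splits {V E : Type} : Model V E → ℕ → Model V E → Model V E → Prop where
  | here (m : Model V E) : Model.Splits m m.rootVar m (.unknown m.rootVar)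
  | there (y : ℕ) (P : Pattern V) (ms : List (Model V E)) (i : ℕ) (h : i < ms.length)
      (x : ℕ) (f c : Model V E) :
      Model.Splits (ms.get ⟨i, h⟩) x f c →
      Model.Splits (.pat y P ms) x f (.pat y P (ms.set i c))

/-- `Descr.Splits d x f c`: the variable `x` occurs in `d`, the `x`-factor is `f`,
and the `x`-context (subtree at `x` replaced by an atomic description carrying the
value at `x`) is `c`. -/
inductive Descr.Splits {V : Type} : Descr V → ℕ → Descr V → Descr V → Prop where
  | here (d : Descr V) : Descr.Splits d d.rootVar d (.atom d.rootVar d.value)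
  | there (y : ℕ) (v : V) (P : Pattern V) (ds : List (Descr V)) (i : ℕ) (h : i < ds.length)
      (x : ℕ) (f c : Descr V) :
      Descr.Splits (ds.get ⟨i, h⟩) x f c →
      Descr.Splits (.comp y v P ds) x f (.comp y v P (ds.set i c))

/-- `Model.ReplaceAt m x m₀ m'`: the model `m'` results from `m` by replacing the
unknown leaf carrying variable `x` by the submodel `m₀` (i.e. `m' = m[x ← m₀]`
where `m.x` is an unknown). -/
inductive Model.ReplaceAt {V E : Type} : Model V E → ℕ → Model V E → Model V E → Prop where
  | here (x : ℕ) (m₀ : Model V E) : Model.ReplaceAt (.unknown x) x m₀ m₀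
  | there (y : ℕ) (P : Pattern V) (ms : List (Model V E)) (i : ℕ) (h : i < ms.length)
      (x : ℕ) (m₀ r : Model V E) :
      Model.ReplaceAt (ms.get ⟨i, h⟩) x m₀ r →
      Model.ReplaceAt (.pat y P ms) x m₀ (.pat y P (ms.set i r))

/-!
A description generated by `m'` mirrors the tree of `m'`, so cutting it at `x` amounts to cutting
`m'` at some occurrence of `x`: the `x`-context of the description is generated by an `x`-context
of `m'`. As `x` occurs only once in `m'`, that `x`-context is unique, and by construction of the
transition it is `m`.
-/

section Duplicate

variable {α : Type*} {a : α}

theorem duplicate_append_of_mem {l₁ l₂ : List α} (h₁ : a ∈ l₁) (h₂ : a ∈ l₂) :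
    (l₁ ++ l₂).Duplicate a :=
  List.duplicate_iff_sublist.2 <|
    (List.singleton_sublist.2 h₁).append (List.singleton_sublist.2 h₂)

theorem duplicate_flatten_of_mem_getElem_of_lt {L : List (List α)} {i j : ℕ} (hij : i < j)
    (hj : j < L.length) (hai : a ∈ L[i]) (haj : a ∈ L[j]) : L.flatten.Duplicate a := by
  have htake : a ∈ (L.take j).flatten :=
    List.mem_flatten_of_mem (List.mem_take_iff_getElem.2 ⟨i, by omega, rfl⟩) hai
  have hdrop : a ∈ (L.drop j).flatten :=
    List.mem_flatten_of_mem (List.mem_drop_iff_getElem.2 ⟨0, by omega, rfl⟩) haj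
  rw [← List.take_append_drop j L, List.flatten_append]
  exact duplicate_append_of_mem htake hdrop

theorem duplicate_flatten_of_mem_getElem_of_ne {L : List (List α)} {i j : ℕ} (hij : i ≠ j)
    (hi : i < L.length) (hj : j < L.length) (hai : a ∈ L[i]) (haj : a ∈ L[j]) :
    L.flatten.Duplicate a := by
  rcases hij.lt_or_gt with hlt | hgt
  · exact duplicate_flatten_of_mem_getElem_of_lt hlt hj hai haj
  · exact duplicate_flatten_of_mem_getElem_of_lt hgt hi haj hai

end Duplicate

namespace Model

variable {V E : Type} {m m₀ m' f f' c c' : Model V E} {x y : ℕ} {P : Pattern V}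
  {ms : List (Model V E)}

theorem vars_pat (y : ℕ) (P : Pattern V) (ms : List (Model V E)) :
    (pat y P ms).vars = y :: (ms.map vars).flatten := by
  rw [vars, List.attach_map_val (f := vars)]

theorem rootVar_mem_vars (m : Model V E) : m.rootVar ∈ m.vars := by
  cases m <;> simp [rootVar, vars]

theorem vars_sublist_flatten_of_mem (hm : m ∈ ms) : m.vars.Sublist (ms.map vars).flatten :=
  List.sublist_flatten_of_mem (List.mem_map_of_mem hm)

theorem vars_sublist_vars_pat_of_mem (hm : m ∈ ms) : m.vars.Sublist (pat y P ms).vars := by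
  rw [vars_pat]
  exact (vars_sublist_flatten_of_mem hm).cons y

theorem duplicate_vars_pat_of_mem_child (hm : m ∈ ms) (hy : y ∈ m.vars) :
    (pat y P ms).vars.Duplicate y := by
  rw [vars_pat]
  exact ((vars_sublist_flatten_of_mem hm).subset hy).duplicate_cons_self

theorem duplicate_vars_pat_of_mem_children {i j : ℕ} (hij : i ≠ j) (hi : i < ms.length)
    (hj : j < ms.length) (hxi : x ∈ ms[i].vars) (hxj : x ∈ ms[j].vars) :
    (pat y P ms).vars.Duplicate x := by
  rw [vars_pat]
  exact (duplicate_flatten_of_mem_getElem_of_ne hij (by simpa using hi) (by simpa using hj)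
    (by simpa using hxi) (by simpa using hxj)).duplicate_cons y

theorem Splits.mem_vars (h : m.Splits x f c) : x ∈ m.vars := by
  induction h with
  | here m => exact m.rootVar_mem_vars
  | there y P ms i hi x _ _ _ ih =>
    exact (vars_sublist_vars_pat_of_mem (List.get_mem ms ⟨i, hi⟩)).subset ih

theorem Splits.context_unique (h : m.Splits x f c) (h' : m.Splits x f' c')
    (hx : ¬ m.vars.Duplicate x) : c = c' := by
  induction h generalizing f' c' with
  | here m =>
    generalize hroot : m.rootVar = x at h' hx
    cases h' with
    | here => rw [hroot]
    | there y P ms j hj _ _ _ hchild =>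
      obtain rfl : y = x := hroot
      exact absurd (duplicate_vars_pat_of_mem_child (List.get_mem ms ⟨j, hj⟩) hchild.mem_vars) hx
  | there y P ms i hi x f c hchild ih =>
    cases h' with
    | here =>
      exact absurd (duplicate_vars_pat_of_mem_child (List.get_mem ms ⟨i, hi⟩) hchild.mem_vars) hx
    | there _ _ _ j hj _ _ c' hchild' =>
      obtain rfl : i = j := by
        by_contra hij
        exact hx (duplicate_vars_pat_of_mem_children hij hi hj hchild.mem_vars hchild'.mem_vars)
      have hx_child : ¬ (ms.get ⟨i, hi⟩).vars.Duplicate x := fun hdup =>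
        hx (hdup.mono_sublist (vars_sublist_vars_pat_of_mem (List.get_mem ms ⟨i, hi⟩)))
      rw [ih hchild' hx_child]

theorem ReplaceAt.splits (h : ReplaceAt m x m₀ m') (hroot : m₀.rootVar = x) :
    m'.Splits x m₀ m := by
  induction h with
  | here x m₀ =>
    subst hroot
    exact .here m₀
  | there y P ms i hi x m₀ r _ ih =>
    have hi' : i < (ms.set i r).length := by simpa using hi
    have hchild : ((ms.set i r).get ⟨i, hi'⟩).Splits x m₀ (ms.get ⟨i, hi⟩) := by
      simpa using ih hroot
    simpa using Splits.there y P (ms.set i r) i hi' x m₀ _ hchild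

end Model

theorem Descr.Splits.value_context {V : Type} {d f c : Descr V} {x : ℕ}
    (h : d.Splits x f c) : c.value = d.value := by
  cases h <;> rfl

namespace Gen

variable {V E : Type} {ev : E → (ℕ → Option V) → Option V} {σ : ℕ → Option V}
  {m : Model V E} {d : Descr V}

theorem rootVar_eq (h : Gen ev m σ d) : d.rootVar = m.rootVar := by
  cases h <;> rfl

theorem pat_set {y : ℕ} {P : Pattern V} {ms : List (Model V E)} {v : V} {ds : List (Descr V)}
    {i : ℕ} (h : Gen ev (.pat y P ms) σ (.comp y v P ds)) (hi : i < ds.length)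
    (hmd : Gen ev m σ d) (hvalue : d.value = ds[i].value) :
    Gen ev (.pat y P (ms.set i m)) σ (.comp y v P (ds.set i d)) := by
  cases h with
  | pat _ _ _ _ _ _ hlen hrel hchildren =>
    have hvalues : (ds.set i d).map Descr.value = ds.map Descr.value := by
      have hi' : i < (ds.map Descr.value).length := by simpa using hi
      rw [List.map_set, hvalue, ← List.getElem_map Descr.value (h := hi'), List.set_getElem_self]
    refine .pat _ _ _ _ _ _ (by simpa using hlen) (hvalues ▸ hrel) fun k hkm hkd => ?_
    rcases eq_or_ne i k with rfl | hik
    · simpa using hmd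
    · simpa [hik] using hchildren k (by simpa using hkm) (by simpa using hkd)

theorem exists_splits_context {x : ℕ} {f c : Descr V} (h : Gen ev m σ d)
    (hsplit : d.Splits x f c) : ∃ mf mc, m.Splits x mf mc ∧ Gen ev mc σ c := by
  induction hsplit generalizing m with
  | here d =>
    rw [h.rootVar_eq]
    exact ⟨m, _, .here m, .unknown _ _ _⟩
  | there y v P ds i hi x f c hchild ih =>
    cases h with
    | pat _ _ ms _ _ _ hlen hrel hchildren =>
      have him : i < ms.length := hlen ▸ hi
      obtain ⟨mf, mc, hsplit, hgen⟩ := ih (hchildren i him hi)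
      exact ⟨mf, .pat y P (ms.set i mc), .there y P ms i him x mf mc hsplit,
        (Gen.pat y P ms σ v ds hlen hrel hchildren).pat_set hi hgen hchild.value_context⟩

end Gen

theorem context_of_gen_after_min_transition_general {V E : Type}
    {ev : E → (ℕ → Option V) → Option V} {m m' f : Model V E} {x : ℕ}
    {σ : ℕ → Option V} {d' dx dc : Descr V}
    (hx : ¬ m'.vars.Duplicate x) (hsplit : m'.Splits x f m) (hdsplit : d'.Splits x dx dc)
    (hgen : Gen ev m' σ d') : Gen ev m σ dc := by
  obtain ⟨mf, mc, hsplit', hgen'⟩ := hgen.exists_splits_context hdsplit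
  rwa [hsplit.context_unique hsplit' hx]

/-- Lemma 2 of the paper. Let `m'` result from a single minimal
transition at `x` from `m`: either `x ← P` (replacing the unknown at `x` by a
pattern node with fresh all-unknown children) or `x ← e` (replacing it by an
expression). Then for every description `d'` generated by `m'` in environment `σ`,
the `x`-context `d'.x̄` is generated by `m` in `σ`. -/
theorem context_of_gen_after_min_transition {V E : Type}
    (ev : E → (ℕ → Option V) → Option V)
    (m m' m₀ : Model V E) (x : ℕ) (σ : ℕ → Option V)
    (hnodup : m'.vars.Nodup)
    (hmin : (∃ (P : Pattern V) (xs : List ℕ), m₀ = .pat x P (xs.map .unknown)) ∨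
            (∃ e : E, m₀ = .expr x e))
    (hrep : Model.ReplaceAt m x m₀ m')
    (d' dx dc : Descr V)
    (hdsplit : d'.Splits x dx dc)
    (hgen : Gen ev m' σ d') :
    Gen ev m σ dc := by
  have hroot : m₀.rootVar = x := by
    rcases hmin with ⟨P, xs, rfl⟩ | ⟨e, rfl⟩ <;> rfl
  exact context_of_gen_after_min_transition_general
    (List.nodup_iff_forall_not_duplicate.1 hnodup x) (hrep.splits hroot) hdsplit hgen
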